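/- Let ε > 0 and let μ, ν be Borel probability measures on ℝᵐ with finite first moments. Then ∫ f dμ ≤ ∫ f dν + ε for all 1-Lipschitz convex functions f : ℝᵐ → ℝ if and only if there exists a pair of random vectors (X, Y) with law(X) = μ, law(Y) = ν, and E[‖X − E[Y | X]‖] ≤ ε. -/

import Mathlib

open MeasureTheory
open scoped ENNReal Pointwise

/-!
For `J : E → StrongDual ℝ E` with `‖J x‖ ≤ 1` and `φ x + ψ y ≤ J x (x - y)`, the supremum of the
affine functions `y ↦ φ x + J x (y - x)` is convex, 1-Lipschitz and lies between `φ` and `-ψ`.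
Domination of `μ` by `ν` up to `ε` on convex 1-Lipschitz functions therefore bounds by `ε` the dual
transport problem of every cost `J x (x - y)`. As these costs form a convex set, Hahn–Banach yields
a single finitely additive coupling `Λ` under which all of them cost at most `ε`. No minimax theorem
or compactness of the set of couplings is involved: since the marginals of `Λ` are countably
additive and inner regular, `Λ` is countably additive on measurable rectangles and extends to a
coupling `π`. The two agree on `J x (x - y)` for simple `J`, and the supremum of these integrals is
`E[‖X - E[Y | X]‖]`. The converse is the conditional Jensen inequality.
-/

section SimpleFunc

variable {α E : Type*} {m : MeasurableSpace α} {ρ : Measure α} [NormedAddCommGroup E]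

lemma exists_simpleFunc_integral_norm_sub_le {u : α → E} (hu : Integrable u ρ) {δ : ℝ}
    (hδ : 0 < δ) : ∃ s : SimpleFunc α E, Integrable s ρ ∧ ∫ x, ‖u x - s x‖ ∂ρ ≤ δ := by
  obtain ⟨s, hs_lt, hs⟩ := (memLp_one_iff_integrable.2 hu).exists_simpleFunc_eLpNorm_sub_lt
    ENNReal.one_ne_top (ENNReal.ofReal_pos.2 hδ).ne'
  rw [memLp_one_iff_integrable] at hs
  refine ⟨s, hs, (ENNReal.ofReal_le_ofReal_iff hδ.le).1 ?_⟩
  calc ENNReal.ofReal (∫ x, ‖u x - s x‖ ∂ρ) = eLpNorm (u - ⇑s) 1 ρ := by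
        rw [eLpNorm_one_eq_lintegral_enorm]
        exact ofReal_integral_norm_eq_lintegral_enorm (hu.sub hs)
    _ ≤ ENNReal.ofReal δ := hs_lt.le

variable [NormedSpace ℝ E]

lemma integrable_simpleFunc_dual_apply {J : SimpleFunc α (StrongDual ℝ E)} {u : α → E}
    (hu : Integrable u ρ) : Integrable (fun x => J x (u x)) ρ := by
  obtain ⟨C, hC⟩ := J.exists_forall_norm_le
  exact (ContinuousLinearMap.id ℝ (StrongDual ℝ E)).integrable_of_bilin_of_bdd_left C
    J.aestronglyMeasurable (ae_of_all _ hC) hu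

end SimpleFunc

section Marginals

variable {X Y : Type*} [MeasurableSpace X] [MeasurableSpace Y]

lemma integral_fst_add_snd {π : Measure (X × Y)} {φ : X → ℝ} {ψ : Y → ℝ}
    (hφ : Integrable φ (π.map Prod.fst)) (hψ : Integrable ψ (π.map Prod.snd)) :
    ∫ p, (φ p.1 + ψ p.2) ∂π = ∫ x, φ x ∂π.map Prod.fst + ∫ y, ψ y ∂π.map Prod.snd := by
  rw [integral_map measurable_fst.aemeasurable hφ.1, integral_map measurable_snd.aemeasurable hψ.1]
  exact integral_add (hφ.comp_measurable measurable_fst) (hψ.comp_measurable measurable_snd)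

lemma integral_add_integral_nonneg {μ : Measure X} {ν : Measure Y} [IsProbabilityMeasure μ]
    [IsProbabilityMeasure ν] {φ : X → ℝ} {ψ : Y → ℝ} (hφ : Integrable φ μ) (hψ : Integrable ψ ν)
    (h : ∀ x y, 0 ≤ φ x + ψ y) : 0 ≤ ∫ x, φ x ∂μ + ∫ y, ψ y ∂ν := by
  have h_prod : ∫ p, (φ p.1 + ψ p.2) ∂μ.prod ν = ∫ x, φ x ∂μ + ∫ y, ψ y ∂ν := by
    rw [integral_fst_add_snd] <;> simp [hφ, hψ]
  exact h_prod ▸ integral_nonneg fun p => h p.1 p.2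

lemma linearMap_apply_simpleFunc_eq_integral {α β : Type*} {Λ : (X × Y → ℝ) →ₗ[ℝ] ℝ}
    {π : Measure (X × Y)} [IsFiniteMeasure π]
    (hΛπ : ∀ A B, MeasurableSet A → MeasurableSet B → Λ ((A ×ˢ B).indicator 1) = π.real (A ×ˢ B))
    (s : SimpleFunc X α) (t : SimpleFunc Y β) (G : α → β → ℝ) :
    Λ (fun p => G (s p.1) (t p.2)) = ∫ p, G (s p.1) (t p.2) ∂π := by
  classical
  have h_sum : (fun p : X × Y => G (s p.1) (t p.2)) = ∑ ab ∈ s.range ×ˢ t.range,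
      G ab.1 ab.2 • ((s ⁻¹' {ab.1}) ×ˢ (t ⁻¹' {ab.2})).indicator 1 := by
    ext p
    rw [Finset.sum_apply, Finset.sum_eq_single (s p.1, t p.2)]
    · simp
    · rintro ⟨a, b⟩ _ hab
      suffices p ∉ (s ⁻¹' {a}) ×ˢ (t ⁻¹' {b}) by simp [this]
      rintro ⟨rfl, rfl⟩
      exact hab rfl
    · simp
  rw [integral_congr_ae (ae_of_all π fun p => congrFun h_sum p), h_sum, map_sum]
  simp only [Finset.sum_apply, map_smul]
  have h_meas (ab : α × β) : MeasurableSet ((s ⁻¹' {ab.1}) ×ˢ (t ⁻¹' {ab.2})) :=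
    (s.measurableSet_fiber _).prod (t.measurableSet_fiber _)
  rw [integral_finsetSum _ fun ab _ => ((integrable_const 1).indicator (h_meas ab)).smul _]
  refine Finset.sum_congr rfl fun ab _ => ?_
  simp only [Pi.smul_apply, integral_smul]
  rw [integral_indicator_one (h_meas ab),
    hΛπ _ _ (s.measurableSet_fiber _) (t.measurableSet_fiber _)]

end Marginals

lemma exists_linearMap_le_of_mem_cone {V : Type*} [AddCommGroup V] [Module ℝ V]
    (C : PointedCone ℝ (V × ℝ)) (p : Submodule ℝ V) (nonneg : ∀ t, (0, t) ∈ C → 0 ≤ t)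
    (dense : ∀ v ∈ p, ∃ t, (v, t) ∈ C) :
    ∃ Λ : V →ₗ[ℝ] ℝ, ∀ v ∈ p, ∀ t, (v, t) ∈ C → Λ v ≤ t := by
  let C' : PointedCone ℝ (p × ℝ) := C.comap (p.subtype.prodMap LinearMap.id)
  let f : p × ℝ →ₗ.[ℝ] ℝ :=
    ⟨LinearMap.range (LinearMap.inr ℝ p ℝ), LinearMap.snd ℝ p ℝ ∘ₗ Submodule.subtype _⟩
  obtain ⟨g, hgf, hgC⟩ := riesz_extension C' f
    (by rintro ⟨_, t, rfl⟩ ht; exact nonneg t ht)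
    (by
      rintro ⟨v, t⟩
      obtain ⟨t', ht'⟩ := dense v v.2
      exact ⟨⟨_, t' - t, rfl⟩, by simpa [C'] using ht'⟩)
  obtain ⟨Λ, hΛ⟩ := (-(g ∘ₗ LinearMap.inl ℝ p ℝ)).exists_extend
  refine ⟨Λ, fun v hv t ht => ?_⟩
  have hg_nonneg : 0 ≤ g (⟨v, hv⟩, t) := hgC _ ht
  have hg_snd : g (0, t) = t := hgf ⟨_, t, rfl⟩
  have hg_add : g (⟨v, hv⟩, t) = g (⟨v, hv⟩, 0) + g (0, t) := by rw [← map_add]; simp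
  have hΛv : Λ v = -g (⟨v, hv⟩, 0) := LinearMap.congr_fun hΛ ⟨v, hv⟩
  linarith

section FinitelyAdditive

variable {X Y : Type*} [MeasurableSpace X] [MeasurableSpace Y] {μ : Measure X} {ν : Measure Y}

/-- The functions on `X × Y` dominated by `φ ⊕ ψ` for some integrable `φ` and `ψ`: the domain on
which every coupling of `μ` and `ν` has finite integrals. No measurability is required. -/
def marginallyDominated (μ : Measure X) (ν : Measure Y) : Submodule ℝ (X × Y → ℝ) where
  carrier := {F | ∃ φ ψ, Integrable φ μ ∧ Integrable ψ ν ∧ ∀ p, |F p| ≤ φ p.1 + ψ p.2}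
  zero_mem' := ⟨0, 0, integrable_zero _ _ _, integrable_zero _ _ _, by simp⟩
  add_mem' := by
    rintro F G ⟨φ, ψ, hφ, hψ, hF⟩ ⟨φ', ψ', hφ', hψ', hG⟩
    refine ⟨φ + φ', ψ + ψ', hφ.add hφ', hψ.add hψ', fun p => ?_⟩
    have h_add := abs_add_le (F p) (G p)
    simp only [Pi.add_apply]
    linarith [hF p, hG p]
  smul_mem' := by
    rintro r F ⟨φ, ψ, hφ, hψ, hF⟩
    refine ⟨|r| • φ, |r| • ψ, hφ.smul _, hψ.smul _, fun p => ?_⟩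
    simpa [abs_mul, mul_add] using mul_le_mul_of_nonneg_left (hF p) (abs_nonneg r)

lemma add_mem_marginallyDominated {φ : X → ℝ} {ψ : Y → ℝ} (hφ : Integrable φ μ)
    (hψ : Integrable ψ ν) : (fun p => φ p.1 + ψ p.2) ∈ marginallyDominated μ ν :=
  ⟨_, _, hφ.abs, hψ.abs, fun _ => abs_add_le _ _⟩

/-- A linear functional `Λ` that acts on `marginallyDominated μ ν` like integration against a
finitely additive measure with marginals `μ` and `ν`. Applied to `F` and `-F`, the single
inequality encodes both positivity and the two marginal conditions; the values of `Λ` outside of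
`marginallyDominated μ ν` are irrelevant. -/
def IsFinitelyAdditiveCoupling (μ : Measure X) (ν : Measure Y) (Λ : (X × Y → ℝ) →ₗ[ℝ] ℝ) : Prop :=
  ∀ F ∈ marginallyDominated μ ν, ∀ φ ψ, Integrable φ μ → Integrable ψ ν →
    (∀ p, F p ≤ φ p.1 + ψ p.2) → Λ F ≤ ∫ x, φ x ∂μ + ∫ y, ψ y ∂ν

namespace IsFinitelyAdditiveCoupling

variable {Λ : (X × Y → ℝ) →ₗ[ℝ] ℝ} {F : X × Y → ℝ} {φ : X → ℝ} {ψ : Y → ℝ}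

lemma abs_apply_le (hΛ : IsFinitelyAdditiveCoupling μ ν Λ) (hφ : Integrable φ μ)
    (hψ : Integrable ψ ν) (hF : ∀ p, |F p| ≤ φ p.1 + ψ p.2) :
    |Λ F| ≤ ∫ x, φ x ∂μ + ∫ y, ψ y ∂ν := by
  have hF_mem : F ∈ marginallyDominated μ ν := ⟨φ, ψ, hφ, hψ, hF⟩
  refine abs_le'.2 ⟨hΛ F hF_mem φ ψ hφ hψ fun p => (le_abs_self _).trans (hF p), ?_⟩
  rw [← map_neg]
  exact hΛ _ (neg_mem hF_mem) φ ψ hφ hψ fun p => (neg_le_abs _).trans (hF p)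

lemma apply_nonneg (hΛ : IsFinitelyAdditiveCoupling μ ν Λ) (hF : F ∈ marginallyDominated μ ν)
    (hF_nonneg : 0 ≤ F) : 0 ≤ Λ F := by
  have h_neg := hΛ (-F) (neg_mem hF) 0 0 (integrable_zero _ _ _) (integrable_zero _ _ _)
    fun p => by simpa using hF_nonneg p
  simpa using h_neg

lemma apply_add (hΛ : IsFinitelyAdditiveCoupling μ ν Λ) (hφ : Integrable φ μ)
    (hψ : Integrable ψ ν) :
    Λ (fun p => φ p.1 + ψ p.2) = ∫ x, φ x ∂μ + ∫ y, ψ y ∂ν := by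
  have h_mem := add_mem_marginallyDominated hφ hψ
  have h_neg := hΛ _ (neg_mem h_mem) (-φ) (-ψ) hφ.neg hψ.neg fun p => by simp [add_comm]
  simp only [map_neg, Pi.neg_apply, integral_neg] at h_neg
  exact le_antisymm (hΛ _ h_mem φ ψ hφ hψ fun _ => le_rfl) (by linarith)

end IsFinitelyAdditiveCoupling

/-- The pairs `(F, t)` such that `F ≤ φ ⊕ ψ + c` for some integrable `φ`, `ψ` and some `c ∈ r • C`,
`r ≥ 0`, with `∫ φ ∂μ + ∫ ψ ∂ν + r * ε ≤ t`. A functional lying below this cone is a finitely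
additive coupling which is at most `ε` on `C`. -/
def couplingCone (μ : Measure X) (ν : Measure Y) (ε : ℝ) {C : Set (X × Y → ℝ)}
    (hC_convex : Convex ℝ C) (hC_nonempty : C.Nonempty) :
    PointedCone ℝ ((X × Y → ℝ) × ℝ) where
  carrier := {z | ∃ r ≥ (0 : ℝ), ∃ c ∈ r • C, ∃ φ ψ, Integrable φ μ ∧ Integrable ψ ν ∧
    (∀ p, z.1 p ≤ φ p.1 + ψ p.2 + c p) ∧ ∫ x, φ x ∂μ + ∫ y, ψ y ∂ν + r * ε ≤ z.2}
  zero_mem' := ⟨0, le_rfl, 0, by simp [Set.zero_smul_set hC_nonempty], 0, 0,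
    integrable_zero _ _ _, integrable_zero _ _ _, by simp, by simp⟩
  add_mem' := by
    rintro z w ⟨r, hr, c, hc, φ, ψ, hφ, hψ, hz, hzt⟩ ⟨r', hr', c', hc', φ', ψ', hφ', hψ', hw, hwt⟩
    refine ⟨r + r', add_nonneg hr hr', c + c', ?_, φ + φ', ψ + ψ', hφ.add hφ', hψ.add hψ',
      fun p => ?_, ?_⟩
    · rw [hC_convex.add_smul hr hr']
      exact Set.add_mem_add hc hc'
    · simp only [Prod.fst_add, Pi.add_apply]
      linarith [hz p, hw p]
    · simp only [Pi.add_apply, integral_add hφ hφ', integral_add hψ hψ', Prod.snd_add]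
      linarith
  smul_mem' := by
    rintro ⟨a, ha⟩ z ⟨r, hr, c, hc, φ, ψ, hφ, hψ, hz, hzt⟩
    refine ⟨a * r, mul_nonneg ha hr, a • c, ?_, a • φ, a • ψ, hφ.smul a, hψ.smul a,
      fun p => ?_, ?_⟩
    · rw [mul_smul]
      exact Set.smul_mem_smul_set hc
    · change a * z.1 p ≤ a * φ p.1 + a * ψ p.2 + a * c p
      linarith [mul_le_mul_of_nonneg_left (hz p) ha]
    · change _ ≤ a * z.2
      simp only [Pi.smul_apply, smul_eq_mul, integral_const_mul]
      linarith [mul_le_mul_of_nonneg_left hzt ha]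

section Duality

variable {C : Set (X × Y → ℝ)} {hC_convex : Convex ℝ C} {hC_nonempty : C.Nonempty} {ε : ℝ}

lemma mem_couplingCone_of_le_add {F : X × Y → ℝ} {φ : X → ℝ} {ψ : Y → ℝ} (hφ : Integrable φ μ)
    (hψ : Integrable ψ ν) (hF : ∀ p, F p ≤ φ p.1 + ψ p.2) :
    (F, ∫ x, φ x ∂μ + ∫ y, ψ y ∂ν) ∈ couplingCone μ ν ε hC_convex hC_nonempty :=
  ⟨0, le_rfl, 0, by simp [Set.zero_smul_set hC_nonempty], φ, ψ, hφ, hψ, by simpa using hF, by simp⟩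

lemma mem_couplingCone_of_mem {c : X × Y → ℝ} (hc : c ∈ C) :
    (c, ε) ∈ couplingCone μ ν ε hC_convex hC_nonempty :=
  ⟨1, zero_le_one, c, by simpa using hc, 0, 0, integrable_zero _ _ _, integrable_zero _ _ _,
    by simp, by simp⟩

lemma nonneg_of_zero_mem_couplingCone [IsProbabilityMeasure μ] [IsProbabilityMeasure ν]
    (hC : ∀ c ∈ C, ∀ φ ψ, Integrable φ μ → Integrable ψ ν → (∀ x y, φ x + ψ y ≤ c (x, y)) →
      ∫ x, φ x ∂μ + ∫ y, ψ y ∂ν ≤ ε)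
    {t : ℝ} (ht : (0, t) ∈ couplingCone μ ν ε hC_convex hC_nonempty) : 0 ≤ t := by
  obtain ⟨r, hr, _, ⟨c, hc, rfl⟩, φ, ψ, hφ, hψ, h_nonneg, ht⟩ := ht
  refine le_trans ?_ ht
  rcases hr.eq_or_lt with rfl | hr
  · simpa using integral_add_integral_nonneg hφ hψ fun x y => by simpa using h_nonneg (x, y)
  · have h_le (x : X) (y : Y) : -r⁻¹ * φ x + -r⁻¹ * ψ y ≤ c (x, y) := by
      have h_xy : 0 ≤ φ x + ψ y + r * c (x, y) := h_nonneg (x, y)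
      field_simp
      linarith
    have h_dual := hC c hc _ _ (hφ.const_mul (-r⁻¹)) (hψ.const_mul (-r⁻¹)) h_le
    rw [integral_const_mul, integral_const_mul] at h_dual
    field_simp at h_dual
    linarith

theorem exists_isFinitelyAdditiveCoupling_apply_le [IsProbabilityMeasure μ]
    [IsProbabilityMeasure ν] (hC_convex : Convex ℝ C) (hC_nonempty : C.Nonempty)
    (hC : ∀ c ∈ C, ∀ φ ψ, Integrable φ μ → Integrable ψ ν → (∀ x y, φ x + ψ y ≤ c (x, y)) →
      ∫ x, φ x ∂μ + ∫ y, ψ y ∂ν ≤ ε) :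
    ∃ Λ, IsFinitelyAdditiveCoupling μ ν Λ ∧ ∀ c ∈ C ∩ marginallyDominated μ ν, Λ c ≤ ε := by
  obtain ⟨Λ, hΛ⟩ := exists_linearMap_le_of_mem_cone
    (couplingCone μ ν ε hC_convex hC_nonempty) (marginallyDominated μ ν)
    (fun _ => nonneg_of_zero_mem_couplingCone hC)
    (fun F ⟨φ, ψ, hφ, hψ, hF⟩ =>
      ⟨_, mem_couplingCone_of_le_add hφ hψ fun p => (le_abs_self _).trans (hF p)⟩)
  exact ⟨Λ, fun F hF φ ψ hφ hψ h_le => hΛ F hF _ (mem_couplingCone_of_le_add hφ hψ h_le),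
    fun c hc => hΛ c hc.2 ε (mem_couplingCone_of_mem hc.1)⟩

end Duality

end FinitelyAdditive

section RectangleContent

open Set

lemma addContent_le_sum_of_subset_biUnion {α ι : Type*} {C : Set (Set α)}
    (m : AddContent ℝ≥0∞ C) (hC : IsSetSemiring C) {s : Finset ι} {f : ι → Set α} {t : Set α}
    (hf : ∀ i ∈ s, f i ∈ C) (ht : t ∈ C) (h : t ⊆ ⋃ i ∈ s, f i) : m t ≤ ∑ i ∈ s, m (f i) := by
  classical
  have h_image := addContent_le_sum_of_subset_sUnion (m := m) hC (J := s.image f) (t := t)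
    (by simpa [Set.subset_def] using hf) ht (by simpa using h)
  exact h_image.trans (Finset.sum_image_le_of_nonneg fun _ _ => zero_le)

variable {X Y : Type*} [MeasurableSpace X] [MeasurableSpace Y]

/-- The products `A ×ˢ B` of measurable sets, written as in `generateFrom_prod`. -/
def measurableRectangles (X Y : Type*) [MeasurableSpace X] [MeasurableSpace Y] :
    Set (Set (X × Y)) :=
  image2 (· ×ˢ ·) {A : Set X | MeasurableSet A} {B : Set Y | MeasurableSet B}

lemma prod_mem_measurableRectangles {A : Set X} {B : Set Y} (hA : MeasurableSet A)
    (hB : MeasurableSet B) : A ×ˢ B ∈ measurableRectangles X Y :=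
  mem_image2_of_mem hA hB

lemma isSetSemiring_measurableRectangles : IsSetSemiring (measurableRectangles X Y) where
  empty_mem := ⟨∅, .empty, ∅, .empty, prod_empty⟩
  inter_mem := by
    rintro _ ⟨A, hA, B, hB, rfl⟩ _ ⟨A', hA', B', hB', rfl⟩
    exact ⟨A ∩ A', hA.inter hA', B ∩ B', hB.inter hB', prod_inter_prod.symm⟩
  sdiff_eq_sUnion' := by
    classical
    rintro _ ⟨A, hA, B, hB, rfl⟩ _ ⟨A', hA', B', hB', rfl⟩
    refine ⟨{(A \ A') ×ˢ B, (A ∩ A') ×ˢ (B \ B')}, ?_, ?_, ?_⟩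
    · simp only [Finset.coe_pair, pair_subset_iff]
      exact ⟨prod_mem_measurableRectangles (hA.diff hA') hB,
        prod_mem_measurableRectangles (hA.inter hA') (hB.diff hB')⟩
    · rw [Finset.coe_pair]
      exact pairwise_pair_of_symm.2 fun _ => disjoint_prod.2 (.inl disjoint_sdiff_inter)
    · rw [Finset.coe_pair, sUnion_pair]
      grind

variable {μ : Measure X} {ν : Measure Y} {m : AddContent ℝ≥0∞ (measurableRectangles X Y)}

lemma addContent_prod_le (hμ : ∀ A, MeasurableSet A → m (A ×ˢ univ) ≤ μ A)
    (hν : ∀ B, MeasurableSet B → m (univ ×ˢ B) ≤ ν B) {A A' : Set X} {B B' : Set Y}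
    (hA : MeasurableSet A) (hA' : MeasurableSet A') (hB : MeasurableSet B)
    (hB' : MeasurableSet B') :
    m (A ×ˢ B) ≤ m (A' ×ˢ B') + (μ (A \ A') + ν (B \ B')) := by
  have h_cover : A ×ˢ B ⊆ ⋃ i ∈ Finset.univ,
      ![A' ×ˢ B', (A \ A') ×ˢ univ, univ ×ˢ (B \ B')] i := by
    rintro ⟨x, y⟩ ⟨hx, hy⟩
    by_cases hx' : x ∈ A' <;> by_cases hy' : y ∈ B' <;> simp_all [Fin.exists_fin_succ]
  have h_le := addContent_le_sum_of_subset_biUnion m isSetSemiring_measurableRectangles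
    (fun i _ => by
      fin_cases i
      exacts [prod_mem_measurableRectangles hA' hB',
        prod_mem_measurableRectangles (hA.diff hA') .univ,
        prod_mem_measurableRectangles .univ (hB.diff hB')])
    (prod_mem_measurableRectangles hA hB) h_cover
  refine h_le.trans ?_
  simp only [Fin.sum_univ_three, Matrix.cons_val_zero, Matrix.cons_val_one, Matrix.cons_val,
    add_assoc]
  gcongr
  exacts [hμ _ (hA.diff hA'), hν _ (hB.diff hB')]

lemma addContent_prod_le_tsum_of_isCompact [TopologicalSpace X] [OpensMeasurableSpace X] [T2Space X]
    [TopologicalSpace Y] [OpensMeasurableSpace Y] [T2Space Y] {K : Set X} {L : Set Y}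
    {U : ℕ → Set X} {V : ℕ → Set Y} (hK : IsCompact K) (hL : IsCompact L)
    (hU : ∀ i, IsOpen (U i)) (hV : ∀ i, IsOpen (V i)) (h : K ×ˢ L ⊆ ⋃ i, U i ×ˢ V i) :
    m (K ×ˢ L) ≤ ∑' i, m (U i ×ˢ V i) := by
  obtain ⟨s, hs⟩ := (hK.prod hL).elim_finite_subcover _ (fun i => (hU i).prod (hV i)) h
  exact (addContent_le_sum_of_subset_biUnion m isSetSemiring_measurableRectangles
    (fun i _ => prod_mem_measurableRectangles (hU i).measurableSet (hV i).measurableSet)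
    (prod_mem_measurableRectangles hK.measurableSet hL.measurableSet) hs).trans
    (ENNReal.sum_le_tsum s)

lemma exists_isCompact_addContent_prod_le [TopologicalSpace X] [OpensMeasurableSpace X] [T2Space X]
    [TopologicalSpace Y] [OpensMeasurableSpace Y] [T2Space Y] [IsFiniteMeasure μ]
    [IsFiniteMeasure ν] [μ.InnerRegularCompactLTTop] [ν.InnerRegularCompactLTTop]
    (hμ : ∀ A, MeasurableSet A → m (A ×ˢ univ) ≤ μ A)
    (hν : ∀ B, MeasurableSet B → m (univ ×ˢ B) ≤ ν B) {A : Set X} {B : Set Y}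
    (hA : MeasurableSet A) (hB : MeasurableSet B) {δ : ℝ≥0∞} (hδ : δ ≠ 0) :
    ∃ K ⊆ A, ∃ L ⊆ B, IsCompact K ∧ IsCompact L ∧ m (A ×ˢ B) ≤ m (K ×ˢ L) + δ := by
  have hδ2 : δ / 2 ≠ 0 := (ENNReal.half_pos hδ).ne'
  obtain ⟨K, hKA, hK, hμK⟩ := hA.exists_isCompact_sdiff_lt (measure_ne_top μ A) hδ2
  obtain ⟨L, hLB, hL, hνL⟩ := hB.exists_isCompact_sdiff_lt (measure_ne_top ν B) hδ2
  refine ⟨K, hKA, L, hLB, hK, hL, ?_⟩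
  calc m (A ×ˢ B) ≤ m (K ×ˢ L) + (μ (A \ K) + ν (B \ L)) :=
        addContent_prod_le hμ hν hA hK.measurableSet hB hL.measurableSet
    _ ≤ m (K ×ˢ L) + (δ / 2 + δ / 2) := by gcongr
    _ = m (K ×ˢ L) + δ := by rw [ENNReal.add_halves]

lemma exists_isOpen_addContent_prod_le [TopologicalSpace X] [OpensMeasurableSpace X]
    [TopologicalSpace Y] [OpensMeasurableSpace Y] [IsFiniteMeasure μ] [IsFiniteMeasure ν]
    [μ.OuterRegular] [ν.OuterRegular] (hμ : ∀ A, MeasurableSet A → m (A ×ˢ univ) ≤ μ A)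
    (hν : ∀ B, MeasurableSet B → m (univ ×ˢ B) ≤ ν B) {A : Set X} {B : Set Y}
    (hA : MeasurableSet A) (hB : MeasurableSet B) {δ : ℝ≥0∞} (hδ : δ ≠ 0) :
    ∃ U ⊇ A, ∃ V ⊇ B, IsOpen U ∧ IsOpen V ∧ m (U ×ˢ V) ≤ m (A ×ˢ B) + δ := by
  have hδ2 : δ / 2 ≠ 0 := (ENNReal.half_pos hδ).ne'
  obtain ⟨U, hAU, hU, _, hμU⟩ := hA.exists_isOpen_sdiff_lt (measure_ne_top μ A) hδ2
  obtain ⟨V, hBV, hV, _, hνV⟩ := hB.exists_isOpen_sdiff_lt (measure_ne_top ν B) hδ2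
  refine ⟨U, hAU, V, hBV, hU, hV, ?_⟩
  calc m (U ×ˢ V) ≤ m (A ×ˢ B) + (μ (U \ A) + ν (V \ B)) :=
        addContent_prod_le hμ hν hU.measurableSet hA hV.measurableSet hB
    _ ≤ m (A ×ˢ B) + (δ / 2 + δ / 2) := by gcongr
    _ = m (A ×ˢ B) + δ := by rw [ENNReal.add_halves]

lemma isSigmaSubadditive_of_marginals_le [StandardBorelSpace X] [StandardBorelSpace Y]
    [IsFiniteMeasure μ] [IsFiniteMeasure ν] (hμ : ∀ A, MeasurableSet A → m (A ×ˢ univ) ≤ μ A)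
    (hν : ∀ B, MeasurableSet B → m (univ ×ˢ B) ≤ ν B) : m.IsSigmaSubadditive := by
  let := upgradeStandardBorel X
  let := upgradeStandardBorel Y
  rintro f hf ⟨A, hA, B, hB, hAB⟩
  choose A' hA' B' hB' hf using hf
  obtain rfl : (fun i => A' i ×ˢ B' i) = f := funext hf
  refine ENNReal.le_of_forall_pos_le_add fun δ hδ _ => ?_
  have hδ2 : (δ / 2 : ℝ≥0∞) ≠ 0 := by simpa using hδ.ne'
  obtain ⟨η, hη, hη_sum⟩ := ENNReal.exists_pos_sum_of_countable' hδ2 ℕ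
  obtain ⟨K, hKA, L, hLB, hK, hL, hKL⟩ := exists_isCompact_addContent_prod_le hμ hν hA hB hδ2
  choose U hAU V hBV hU hV hUV using fun i =>
    exists_isOpen_addContent_prod_le hμ hν (hA' i) (hB' i) (hη i).ne'
  have h_cover : K ×ˢ L ⊆ ⋃ i, U i ×ˢ V i :=
    (prod_mono hKA hLB).trans <| hAB.subset.trans <|
      iUnion_mono fun i => prod_mono (hAU i) (hBV i)
  calc m (⋃ i, A' i ×ˢ B' i) = m (A ×ˢ B) := by rw [← hAB]
    _ ≤ m (K ×ˢ L) + δ / 2 := hKL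
    _ ≤ ∑' i, m (U i ×ˢ V i) + δ / 2 := by
      gcongr
      exact addContent_prod_le_tsum_of_isCompact hK hL hU hV h_cover
    _ ≤ ∑' i, (m (A' i ×ˢ B' i) + η i) + δ / 2 := by
      gcongr with i
      exact hUV i
    _ ≤ ∑' i, m (A' i ×ˢ B' i) + δ / 2 + δ / 2 := by
      rw [ENNReal.tsum_add]
      gcongr
    _ = ∑' i, m (A' i ×ˢ B' i) + δ := by rw [add_assoc, ENNReal.add_halves]

theorem exists_measure_prod_eq_addContent [StandardBorelSpace X] [StandardBorelSpace Y]
    [IsFiniteMeasure μ] [IsFiniteMeasure ν] (hμ : ∀ A, MeasurableSet A → m (A ×ˢ univ) ≤ μ A)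
    (hν : ∀ B, MeasurableSet B → m (univ ×ˢ B) ≤ ν B) :
    ∃ π : Measure (X × Y), ∀ A B, MeasurableSet A → MeasurableSet B →
      π (A ×ˢ B) = m (A ×ˢ B) :=
  ⟨m.measure isSetSemiring_measurableRectangles generateFrom_prod.ge
    (isSigmaSubadditive_of_marginals_le hμ hν), fun _ _ hA hB =>
      m.measure_eq isSetSemiring_measurableRectangles generateFrom_prod.symm _
        (prod_mem_measurableRectangles hA hB)⟩

end RectangleContent

section Representation

variable {X Y : Type*} [MeasurableSpace X] [MeasurableSpace Y] {μ : Measure X} {ν : Measure Y}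

lemma indicator_one_mem_marginallyDominated [IsFiniteMeasure μ] {S : Set (X × Y)} :
    S.indicator 1 ∈ marginallyDominated μ ν :=
  ⟨1, 0, integrable_const 1, integrable_zero _ _ _, fun p => by
    by_cases hp : p ∈ S <;> simp [hp]⟩

namespace IsFinitelyAdditiveCoupling

variable {Λ : (X × Y → ℝ) →ₗ[ℝ] ℝ}

lemma apply_indicator_nonneg [IsFiniteMeasure μ] (hΛ : IsFinitelyAdditiveCoupling μ ν Λ)
    (S : Set (X × Y)) : 0 ≤ Λ (S.indicator 1) :=
  hΛ.apply_nonneg indicator_one_mem_marginallyDominated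
    (Set.indicator_nonneg fun _ _ => zero_le_one)

lemma apply_indicator_prod_univ [IsFiniteMeasure μ] (hΛ : IsFinitelyAdditiveCoupling μ ν Λ)
    {A : Set X} (hA : MeasurableSet A) : Λ ((A ×ˢ Set.univ).indicator 1) = μ.real A := by
  have h_add := hΛ.apply_add ((integrable_const (1 : ℝ)).indicator hA) (integrable_zero Y ℝ ν)
  rw [integral_indicator_const _ hA] at h_add
  convert h_add using 1
  · congr 1
    ext p
    by_cases hp : p.1 ∈ A <;> simp [hp]
  · simp

lemma apply_indicator_univ_prod [IsFiniteMeasure ν] (hΛ : IsFinitelyAdditiveCoupling μ ν Λ)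
    {B : Set Y} (hB : MeasurableSet B) : Λ ((Set.univ ×ˢ B).indicator 1) = ν.real B := by
  have h_add := hΛ.apply_add (integrable_zero X ℝ μ) ((integrable_const (1 : ℝ)).indicator hB)
  rw [integral_indicator_const _ hB] at h_add
  convert h_add using 1
  · congr 1
    ext p
    by_cases hp : p.2 ∈ B <;> simp [hp]
  · simp

/-- The content `A ×ˢ B ↦ Λ 1_{A ×ˢ B}` on measurable rectangles. -/
noncomputable def content [IsFiniteMeasure μ] (hΛ : IsFinitelyAdditiveCoupling μ ν Λ) :
    AddContent ℝ≥0∞ (measurableRectangles X Y) where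
  toFun S := ENNReal.ofReal (Λ (S.indicator 1))
  empty' := by rw [Set.indicator_empty', map_zero, ENNReal.ofReal_zero]
  sUnion' I _ hI _ := by
    have h_sum : (⋃₀ (I : Set (Set (X × Y)))).indicator (1 : X × Y → ℝ) =
        ∑ S ∈ I, S.indicator 1 := by
      ext p
      rw [Set.sUnion_eq_biUnion, Finset.sum_apply]
      exact Finset.indicator_biUnion_apply I id hI p
    rw [h_sum, map_sum, ENNReal.ofReal_sum_of_nonneg fun S _ => hΛ.apply_indicator_nonneg S]

lemma content_apply [IsFiniteMeasure μ] (hΛ : IsFinitelyAdditiveCoupling μ ν Λ)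
    (S : Set (X × Y)) : hΛ.content S = ENNReal.ofReal (Λ (S.indicator 1)) :=
  rfl

theorem exists_measure [StandardBorelSpace X] [StandardBorelSpace Y] [IsFiniteMeasure μ]
    [IsFiniteMeasure ν] (hΛ : IsFinitelyAdditiveCoupling μ ν Λ) :
    ∃ π : Measure (X × Y), π.map Prod.fst = μ ∧ π.map Prod.snd = ν ∧
      ∀ A B, MeasurableSet A → MeasurableSet B → Λ ((A ×ˢ B).indicator 1) = π.real (A ×ˢ B) := by
  have h_fst {A : Set X} (hA : MeasurableSet A) : hΛ.content (A ×ˢ Set.univ) = μ A := by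
    rw [hΛ.content_apply, hΛ.apply_indicator_prod_univ hA, ofReal_measureReal]
  have h_snd {B : Set Y} (hB : MeasurableSet B) : hΛ.content (Set.univ ×ˢ B) = ν B := by
    rw [hΛ.content_apply, hΛ.apply_indicator_univ_prod hB, ofReal_measureReal]
  obtain ⟨π, hπ⟩ := exists_measure_prod_eq_addContent (fun _ hA => (h_fst hA).le)
    fun _ hB => (h_snd hB).le
  refine ⟨π, ?_, ?_, fun A B hA hB => ?_⟩
  · ext A hA
    rw [Measure.map_apply measurable_fst hA, ← Set.prod_univ, hπ A _ hA .univ, h_fst hA]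
  · ext B hB
    rw [Measure.map_apply measurable_snd hB, ← Set.univ_prod, hπ _ B .univ hB, h_snd hB]
  · rw [measureReal_def, hπ A B hA hB, hΛ.content_apply,
      ENNReal.toReal_ofReal (hΛ.apply_indicator_nonneg _)]

lemma apply_eq_integral_of_forall_approx (hΛ : IsFinitelyAdditiveCoupling μ ν Λ)
    {π : Measure (X × Y)} (hπ₁ : π.map Prod.fst = μ) (hπ₂ : π.map Prod.snd = ν)
    {F : X × Y → ℝ} (hF : Integrable F π)
    (h_approx : ∀ δ > 0, ∃ F' φ ψ, Integrable F' π ∧ Λ F' = ∫ p, F' p ∂π ∧ Integrable φ μ ∧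
      Integrable ψ ν ∧ (∀ p, |F p - F' p| ≤ φ p.1 + ψ p.2) ∧
      ∫ x, φ x ∂μ + ∫ y, ψ y ∂ν ≤ δ) :
    Λ F = ∫ p, F p ∂π := by
  refine eq_of_forall_dist_le fun δ hδ => ?_
  obtain ⟨F', φ, ψ, hF', hΛF', hφ, hψ, h_le, h_small⟩ := h_approx (δ / 2) (half_pos hδ)
  have hΛ_le : |Λ F - Λ F'| ≤ δ / 2 := by
    rw [← map_sub]
    exact (hΛ.abs_apply_le hφ hψ h_le).trans h_small
  have hπ_le : |∫ p, F p ∂π - ∫ p, F' p ∂π| ≤ δ / 2 := by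
    subst hπ₁ hπ₂
    rw [← integral_sub hF hF']
    calc |∫ p, (F p - F' p) ∂π| ≤ ∫ p, |F p - F' p| ∂π := abs_integral_le_integral_abs
      _ ≤ ∫ p, (φ p.1 + ψ p.2) ∂π := integral_mono (hF.sub hF').abs
          ((hφ.comp_measurable measurable_fst).add (hψ.comp_measurable measurable_snd)) h_le
      _ = _ := integral_fst_add_snd hφ hψ
      _ ≤ δ / 2 := h_small
  calc dist (Λ F) (∫ p, F p ∂π)
      = |(Λ F - Λ F') - (∫ p, F p ∂π - ∫ p, F' p ∂π)| := by
        rw [Real.dist_eq, hΛF']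
        congr 1
        ring
    _ ≤ δ / 2 + δ / 2 := (abs_sub _ _).trans (add_le_add hΛ_le hπ_le)
    _ = δ := add_halves δ

variable {E : Type*} [NormedAddCommGroup E] [NormedSpace ℝ E]

theorem apply_simpleFunc_dual_eq_integral (hΛ : IsFinitelyAdditiveCoupling μ ν Λ)
    {π : Measure (X × Y)} [IsFiniteMeasure π] (hπ₁ : π.map Prod.fst = μ)
    (hπ₂ : π.map Prod.snd = ν)
    (hΛπ : ∀ A B, MeasurableSet A → MeasurableSet B → Λ ((A ×ˢ B).indicator 1) = π.real (A ×ˢ B))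
    (J : SimpleFunc X (StrongDual ℝ E)) {u : X → E} {v : Y → E} (hu : Integrable u μ)
    (hv : Integrable v ν) :
    Λ (fun p => J p.1 (u p.1 - v p.2)) = ∫ p, J p.1 (u p.1 - v p.2) ∂π := by
  obtain ⟨C, hC_pos, hC⟩ : ∃ C > 0, ∀ x, ‖J x‖ ≤ C :=
    let ⟨C, hC⟩ := J.exists_forall_norm_le
    ⟨max C 1, by positivity, fun x => (hC x).trans (le_max_left C 1)⟩
  have h_int {u : X → E} {v : Y → E} (hu : Integrable u μ) (hv : Integrable v ν) :
      Integrable (fun p => J p.1 (u p.1 - v p.2)) π := by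
    subst hπ₁ hπ₂
    exact integrable_simpleFunc_dual_apply (J := J.comp Prod.fst measurable_fst)
      ((hu.comp_measurable measurable_fst).sub (hv.comp_measurable measurable_snd))
  refine hΛ.apply_eq_integral_of_forall_approx hπ₁ hπ₂ (h_int hu hv) fun δ hδ => ?_
  have hδC : 0 < δ / (2 * C) := by positivity
  obtain ⟨s, hs, hus⟩ := exists_simpleFunc_integral_norm_sub_le hu hδC
  obtain ⟨t, ht, hvt⟩ := exists_simpleFunc_integral_norm_sub_le hv hδC
  refine ⟨fun p => J p.1 (s p.1 - t p.2), fun x => C * ‖u x - s x‖, fun y => C * ‖v y - t y‖,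
    h_int hs ht, linearMap_apply_simpleFunc_eq_integral hΛπ (J.pair s) t fun a b => a.1 (a.2 - b),
    (hu.sub hs).norm.const_mul C, (hv.sub ht).norm.const_mul C, fun p => ?_, ?_⟩
  · calc |J p.1 (u p.1 - v p.2) - J p.1 (s p.1 - t p.2)|
        = ‖J p.1 ((u p.1 - s p.1) - (v p.2 - t p.2))‖ := by
          rw [← map_sub, Real.norm_eq_abs, sub_sub_sub_comm]
      _ ≤ C * (‖u p.1 - s p.1‖ + ‖v p.2 - t p.2‖) :=
          (J p.1).le_of_opNorm_le_of_le (hC p.1) (norm_sub_le _ _)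
      _ = _ := mul_add _ _ _
  · rw [integral_const_mul, integral_const_mul, ← mul_add]
    calc _ ≤ C * (δ / (2 * C) + δ / (2 * C)) := by gcongr
      _ = δ := by field_simp; ring

end IsFinitelyAdditiveCoupling

end Representation

section ConditionalExpectation

variable {Ω α E : Type*} {mΩ : MeasurableSpace Ω} {P : Measure Ω} [NormedAddCommGroup E]
  [NormedSpace ℝ E]

lemma exists_simpleFunc_dual_apply_eq_norm [MeasurableSpace α] (s : SimpleFunc α E) :
    ∃ J : SimpleFunc α (StrongDual ℝ E), ∀ x, ‖J x‖ ≤ 1 ∧ J x (s x) = ‖s x‖ := by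
  choose J hJ using exists_dual_vector'' ℝ (E := E)
  exact ⟨s.map J, fun x => hJ (s x)⟩

lemma integral_norm_le_of_forall_simpleFunc_dual [MeasurableSpace α] {ρ : Measure α} {u : α → E}
    (hu : Integrable u ρ) {ε : ℝ}
    (h : ∀ J : SimpleFunc α (StrongDual ℝ E), (∀ x, ‖J x‖ ≤ 1) → ∫ x, J x (u x) ∂ρ ≤ ε) :
    ∫ x, ‖u x‖ ∂ρ ≤ ε := by
  refine le_of_forall_pos_le_add fun δ hδ => ?_
  obtain ⟨s, hs, hus⟩ := exists_simpleFunc_integral_norm_sub_le hu (half_pos hδ)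
  obtain ⟨J, hJ⟩ := exists_simpleFunc_dual_apply_eq_norm s
  have h_norm_le (x : α) : ‖u x‖ ≤ J x (u x) + 2 * ‖u x - s x‖ := by
    have h_sub : J x (s x) - J x (u x) ≤ ‖u x - s x‖ := by
      rw [← map_sub, norm_sub_rev]
      exact (le_abs_self _).trans ((J x).le_of_opNorm_le (hJ x).1 _ |>.trans_eq (one_mul _))
    linarith [norm_le_norm_add_norm_sub (s x) (u x), (hJ x).2, norm_sub_rev (u x) (s x)]
  have hJu : Integrable (fun x => J x (u x)) ρ := integrable_simpleFunc_dual_apply hu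
  have h_err : Integrable (fun x => 2 * ‖u x - s x‖) ρ := (hu.sub hs).norm.const_mul 2
  calc ∫ x, ‖u x‖ ∂ρ ≤ ∫ x, (J x (u x) + 2 * ‖u x - s x‖) ∂ρ :=
        integral_mono hu.norm (hJu.add h_err) h_norm_le
    _ = ∫ x, J x (u x) ∂ρ + 2 * ∫ x, ‖u x - s x‖ ∂ρ := by
        rw [integral_add hJu h_err, integral_const_mul]
    _ ≤ ε + δ := by linarith [h J fun x => (hJ x).1]

lemma integral_norm_condExp_comap_le [CompleteSpace E] [mα : MeasurableSpace α]
    [IsFiniteMeasure P] {f : Ω → α} (hf : Measurable f) {U : Ω → E} (hU : Integrable U P) {ε : ℝ}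
    (h : ∀ J : SimpleFunc α (StrongDual ℝ E), (∀ x, ‖J x‖ ≤ 1) →
      ∫ ω, J (f ω) (U ω) ∂P ≤ ε) :
    ∫ ω, ‖(P[U | mα.comap f]) ω‖ ∂P ≤ ε := by
  have hm := hf.comap_le
  obtain ⟨g, hg, hgf⟩ := (stronglyMeasurable_condExp (μ := P) (m := mα.comap f)
    (f := U)).exists_eq_measurable_comp
  have hg_int : Integrable g (P.map f) :=
    (integrable_map_measure hg.aestronglyMeasurable hf.aemeasurable).2 (hgf ▸ integrable_condExp)
  have h_pull_out (J : SimpleFunc α (StrongDual ℝ E)) :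
      ∫ x, J x (g x) ∂P.map f = ∫ ω, J (f ω) (U ω) ∂P := by
    have hJf : StronglyMeasurable[mα.comap f] fun ω => J (f ω) :=
      J.stronglyMeasurable.comp_measurable (comap_measurable f)
    have hJU : Integrable (fun ω => J (f ω) (U ω)) P :=
      integrable_simpleFunc_dual_apply (J := J.comp f hf) hU
    have h_ae := condExp_bilin_of_stronglyMeasurable_left
      (ContinuousLinearMap.id ℝ (StrongDual ℝ E)) hJf hJU hU
    calc ∫ x, J x (g x) ∂P.map f = ∫ ω, J (f ω) ((P[U | mα.comap f]) ω) ∂P := by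
          rw [integral_map hf.aemeasurable (integrable_simpleFunc_dual_apply hg_int).1, hgf]
          rfl
      _ = ∫ ω, (P[fun ω => J (f ω) (U ω) | mα.comap f]) ω ∂P := (integral_congr_ae h_ae).symm
      _ = ∫ ω, J (f ω) (U ω) ∂P := integral_condExp hm
  calc ∫ ω, ‖(P[U | mα.comap f]) ω‖ ∂P = ∫ x, ‖g x‖ ∂P.map f := by
        rw [integral_map hf.aemeasurable hg.norm.aestronglyMeasurable, hgf]
        rfl
    _ ≤ ε := integral_norm_le_of_forall_simpleFunc_dual hg_int fun J hJ =>
        (h_pull_out J).trans_le (h J hJ)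

lemma integral_norm_sub_condExp_comap_le [CompleteSpace E] [mE : MeasurableSpace E]
    [BorelSpace E] [SecondCountableTopology E] [IsFiniteMeasure P] {U V : Ω → E}
    (hU : Measurable U) (hU_int : Integrable U P) (hV_int : Integrable V P) {ε : ℝ}
    (h : ∀ J : SimpleFunc E (StrongDual ℝ E), (∀ x, ‖J x‖ ≤ 1) →
      ∫ ω, J (U ω) (U ω - V ω) ∂P ≤ ε) :
    ∫ ω, ‖U ω - (P[V | mE.comap U]) ω‖ ∂P ≤ ε := by
  have hU_sm : StronglyMeasurable[mE.comap U] U := (comap_measurable U).stronglyMeasurable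
  have h_ae : (fun ω => ‖U ω - (P[V | mE.comap U]) ω‖) =ᵐ[P]
      fun ω => ‖(P[U - V | mE.comap U]) ω‖ := by
    filter_upwards [condExp_sub hU_int hV_int (mE.comap U)] with ω hω
    rw [hω, Pi.sub_apply, condExp_of_stronglyMeasurable hU.comap_le hU_sm hU_int]
  rw [integral_congr_ae h_ae]
  exact integral_norm_condExp_comap_le hU (hU_int.sub hV_int) h

omit [NormedSpace ℝ E] in
lemma integrable_lipschitzWith_comp {K : NNReal} {f : E → ℝ} [IsFiniteMeasure P]
    (hf : LipschitzWith K f) {U : Ω → E} (hU : Integrable U P) :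
    Integrable (fun ω => f (U ω)) P := by
  refine ((integrable_const |f 0|).add (hU.norm.const_mul K)).mono'
    (hf.continuous.comp_aestronglyMeasurable hU.aestronglyMeasurable) (ae_of_all _ fun ω => ?_)
  have h_dist := hf.dist_le_mul (U ω) 0
  rw [Real.dist_eq, dist_zero_right] at h_dist
  calc ‖f (U ω)‖ ≤ ‖f 0‖ + ‖f (U ω) - f 0‖ := norm_le_norm_add_norm_sub' _ _
    _ ≤ |f 0| + K * ‖U ω‖ := by exact add_le_add_right h_dist _

lemma integral_convex_lipschitzWith_le [CompleteSpace E] [IsFiniteMeasure P]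
    {m : MeasurableSpace Ω} (hm : m ≤ mΩ) {K : NNReal} {f : E → ℝ}
    (hf_convex : ConvexOn ℝ Set.univ f) (hf_lip : LipschitzWith K f) {U V : Ω → E}
    (hU : Integrable U P) (hV : Integrable V P) :
    ∫ ω, f (U ω) ∂P ≤ ∫ ω, f (V ω) ∂P + K * ∫ ω, ‖U ω - (P[V | m]) ω‖ ∂P := by
  have hfV := integrable_lipschitzWith_comp hf_lip hV
  have h_err : Integrable (fun ω => K * ‖U ω - (P[V | m]) ω‖) P :=
    (hU.sub integrable_condExp).norm.const_mul _
  have h_jensen := hf_convex.map_condExp_le_univ hm hf_lip.continuous.lowerSemicontinuous hV hfV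
  calc ∫ ω, f (U ω) ∂P
      ≤ ∫ ω, ((P[f ∘ V | m]) ω + K * ‖U ω - (P[V | m]) ω‖) ∂P := by
        refine integral_mono_ae (integrable_lipschitzWith_comp hf_lip hU)
          (integrable_condExp.add h_err) ?_
        filter_upwards [h_jensen] with ω hω
        have h_lip := hf_lip.le_add_mul (U ω) ((P[V | m]) ω)
        rw [dist_eq_norm] at h_lip
        exact h_lip.trans (by gcongr; exact hω)
    _ = ∫ ω, f (V ω) ∂P + K * ∫ ω, ‖U ω - (P[V | m]) ω‖ ∂P := by
        rw [integral_add integrable_condExp h_err, integral_condExp hm, integral_const_mul]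
        rfl

end ConditionalExpectation

section Supremum

variable {ι E : Type*} [Nonempty ι]

lemma convexOn_ciSup [AddCommGroup E] [Module ℝ E] {s : Set E} {f : ι → E → ℝ}
    (hf : ∀ i, ConvexOn ℝ s (f i)) (h_bdd : ∀ x ∈ s, BddAbove (Set.range fun i => f i x)) :
    ConvexOn ℝ s fun x => ⨆ i, f i x := by
  refine ⟨(hf (Classical.arbitrary ι)).1, fun x hx y hy a b ha hb hab => ciSup_le fun i => ?_⟩
  calc f i (a • x + b • y) ≤ a • f i x + b • f i y := (hf i).2 hx hy ha hb hab
    _ ≤ a • (⨆ i, f i x) + b • ⨆ i, f i y := by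
      gcongr
      exacts [le_ciSup (h_bdd x hx) i, le_ciSup (h_bdd y hy) i]

lemma lipschitzWith_ciSup [PseudoMetricSpace E] {K : NNReal} {f : ι → E → ℝ}
    (hf : ∀ i, LipschitzWith K (f i)) (h_bdd : ∀ x, BddAbove (Set.range fun i => f i x)) :
    LipschitzWith K fun x => ⨆ i, f i x :=
  .of_le_add_mul K fun x y => ciSup_le fun i =>
    ((hf i).le_add_mul x y).trans (by gcongr; exact le_ciSup (h_bdd y) i)

end Supremum

section Strassen

variable {E : Type*} [NormedAddCommGroup E] [NormedSpace ℝ E]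

/-- The costs `(x, y) ↦ J x (x - y)`, where `J x` ranges over the unit ball of the dual. Their
supremum over measurable `J` at a coupling `(X, Y)` is `E[‖X - E[Y | X]‖]`. -/
def barycentricDualCosts (E : Type*) [NormedAddCommGroup E] [NormedSpace ℝ E] :
    Set (E × E → ℝ) :=
  (fun (J : E → StrongDual ℝ E) p => J p.1 (p.1 - p.2)) '' {J | ∀ x, ‖J x‖ ≤ 1}

lemma convex_barycentricDualCosts : Convex ℝ (barycentricDualCosts E) := by
  have h_ball : Convex ℝ {J : E → StrongDual ℝ E | ∀ x, ‖J x‖ ≤ 1} := by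
    simpa [Set.pi] using convex_pi (s := Set.univ)
      fun (_ : E) _ => convex_closedBall (0 : StrongDual ℝ E) 1
  exact h_ball.is_linear_image ⟨fun _ _ => rfl, fun _ _ => rfl⟩

lemma zero_mem_barycentricDualCosts : 0 ∈ barycentricDualCosts E :=
  ⟨0, by simp, rfl⟩

lemma exists_convexOn_lipschitzWith_between {φ ψ : E → ℝ} {J : E → StrongDual ℝ E}
    (hJ : ∀ x, ‖J x‖ ≤ 1) (h : ∀ x y, φ x + J x (y - x) ≤ ψ y) :
    ∃ f : E → ℝ, ConvexOn ℝ Set.univ f ∧ LipschitzWith 1 f ∧ φ ≤ f ∧ f ≤ ψ := by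
  have h_bdd (y : E) : BddAbove (Set.range fun x => φ x + J x (y - x)) :=
    ⟨ψ y, Set.forall_mem_range.2 fun x => h x y⟩
  have h_convex (x : E) : ConvexOn ℝ Set.univ fun y => φ x + J x (y - x) := by
    have h_aff := ((J x).toLinearMap.convexOn convex_univ).add_const (φ x - J x x)
    refine h_aff.congr fun y _ => ?_
    simp only [ContinuousLinearMap.coe_coe, Pi.add_apply, map_sub]
    ring
  have h_lip (x : E) : LipschitzWith 1 fun y => φ x + J x (y - x) := by
    refine .of_le_add fun y z => ?_
    have h_le := (le_abs_self _).trans ((J x).le_of_opNorm_le (hJ x) (y - z))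
    rw [← sub_sub_sub_cancel_right y z x, map_sub, sub_sub_sub_cancel_right, one_mul,
      ← dist_eq_norm] at h_le
    linarith
  refine ⟨fun y => ⨆ x, (φ x + J x (y - x)), convexOn_ciSup h_convex fun y _ => h_bdd y,
    lipschitzWith_ciSup h_lip h_bdd, fun x => ?_, fun y => ciSup_le fun x => h x y⟩
  calc φ x = φ x + J x (x - x) := by rw [sub_self, map_zero, add_zero]
    _ ≤ ⨆ z, (φ z + J z (x - z)) := le_ciSup (h_bdd x) x

variable [MeasurableSpace E] {μ ν : Measure E} {ε : ℝ}

lemma barycentricDualCosts_subset_marginallyDominated (hμ : Integrable id μ)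
    (hν : Integrable id ν) : barycentricDualCosts E ⊆ marginallyDominated μ ν := by
  rintro _ ⟨J, hJ, rfl⟩
  refine ⟨fun x => ‖x‖, fun y => ‖y‖, hμ.norm, hν.norm, fun p => ?_⟩
  calc |J p.1 (p.1 - p.2)| ≤ 1 * ‖p.1 - p.2‖ := (J p.1).le_of_opNorm_le (hJ p.1) _
    _ ≤ ‖p.1‖ + ‖p.2‖ := (one_mul _).trans_le (norm_sub_le _ _)

variable [IsProbabilityMeasure μ] [IsProbabilityMeasure ν]

lemma integral_add_integral_le_of_le_barycentricDualCosts (hμ : Integrable id μ)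
    (hν : Integrable id ν)
    (h : ∀ f : E → ℝ, ConvexOn ℝ Set.univ f → LipschitzWith 1 f →
      ∫ x, f x ∂μ ≤ ∫ x, f x ∂ν + ε)
    {c : E × E → ℝ} (hc : c ∈ barycentricDualCosts E) {φ ψ : E → ℝ} (hφ : Integrable φ μ)
    (hψ : Integrable ψ ν) (h_le : ∀ x y, φ x + ψ y ≤ c (x, y)) :
    ∫ x, φ x ∂μ + ∫ y, ψ y ∂ν ≤ ε := by
  obtain ⟨J, hJ, rfl⟩ := hc
  have h_aff_le (x y : E) : φ x + J x (y - x) ≤ -ψ y := by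
    have h_xy : φ x + ψ y ≤ J x (x - y) := h_le x y
    rw [← neg_sub y x, map_neg] at h_xy
    linarith
  obtain ⟨f, hf_convex, hf_lip, h_le_f, hf_le⟩ :=
    exists_convexOn_lipschitzWith_between hJ h_aff_le
  have h_chain : ∫ x, φ x ∂μ ≤ -∫ y, ψ y ∂ν + ε :=
    calc ∫ x, φ x ∂μ ≤ ∫ x, f x ∂μ :=
          integral_mono hφ (integrable_lipschitzWith_comp hf_lip hμ) h_le_f
      _ ≤ ∫ y, f y ∂ν + ε := h f hf_convex hf_lip
      _ ≤ ∫ y, -ψ y ∂ν + ε := by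
          gcongr
          exacts [integrable_lipschitzWith_comp hf_lip hν, hψ.neg]
      _ = -∫ y, ψ y ∂ν + ε := by rw [integral_neg]
  linarith

variable [CompleteSpace E] [SecondCountableTopology E] [BorelSpace E]

theorem exists_coupling_integral_norm_sub_condExp_le (hμ : Integrable id μ)
    (hν : Integrable id ν)
    (h : ∀ f : E → ℝ, ConvexOn ℝ Set.univ f → LipschitzWith 1 f →
      ∫ x, f x ∂μ ≤ ∫ x, f x ∂ν + ε) :
    ∃ π : Measure (E × E), IsProbabilityMeasure π ∧ π.map Prod.fst = μ ∧ π.map Prod.snd = ν ∧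
      ∫ p, ‖p.1 - (π[(fun q : E × E => q.2) |
        MeasurableSpace.comap Prod.fst inferInstance]) p‖ ∂π ≤ ε := by
  obtain ⟨Λ, hΛ, hΛ_le⟩ := exists_isFinitelyAdditiveCoupling_apply_le
    convex_barycentricDualCosts ⟨0, zero_mem_barycentricDualCosts⟩
    fun c hc φ ψ => integral_add_integral_le_of_le_barycentricDualCosts hμ hν h hc
  obtain ⟨π, hπ₁, hπ₂, hΛπ⟩ := hΛ.exists_measure
  have : IsProbabilityMeasure (π.map Prod.fst) := hπ₁ ▸ inferInstance
  have hπ : IsProbabilityMeasure π := Measure.isProbabilityMeasure_of_map Prod.fst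
  have h_fst : Integrable Prod.fst π := (hπ₁ ▸ hμ).comp_measurable measurable_fst
  have h_snd : Integrable Prod.snd π := (hπ₂ ▸ hν).comp_measurable measurable_snd
  refine ⟨π, hπ, hπ₁, hπ₂, integral_norm_sub_condExp_comap_le measurable_fst h_fst h_snd
    fun J hJ => ?_⟩
  have hJ_mem : (fun p => J p.1 (p.1 - p.2)) ∈ barycentricDualCosts E := ⟨J, hJ, rfl⟩
  calc ∫ p, J p.1 (p.1 - p.2) ∂π = Λ fun p => J p.1 (p.1 - p.2) :=
        (hΛ.apply_simpleFunc_dual_eq_integral hπ₁ hπ₂ hΛπ J hμ hν).symm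
    _ ≤ ε := hΛ_le _ ⟨hJ_mem, barycentricDualCosts_subset_marginallyDominated hμ hν hJ_mem⟩

end Strassen

theorem stmt_4_general {E : Type*} [NormedAddCommGroup E] [NormedSpace ℝ E]
    [CompleteSpace E] [SecondCountableTopology E] [MeasurableSpace E] [BorelSpace E]
    (μ ν : Measure E) [IsProbabilityMeasure μ] [IsProbabilityMeasure ν]
    (hμ : Integrable (fun x => ‖x‖) μ) (hν : Integrable (fun x => ‖x‖) ν) (ε : ℝ) :
    (∀ f : E → ℝ, ConvexOn ℝ Set.univ f → LipschitzWith 1 f →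
        ∫ x, f x ∂μ ≤ ∫ x, f x ∂ν + ε) ↔
      (∃ π : Measure (E × E), IsProbabilityMeasure π ∧
        π.map Prod.fst = μ ∧ π.map Prod.snd = ν ∧
        ∫ p, ‖p.1 -
            (π[(fun q : E × E => q.2) |
              MeasurableSpace.comap Prod.fst inferInstance]) p‖ ∂π ≤ ε) := by
  have hμ_id : Integrable id μ := (integrable_norm_iff aestronglyMeasurable_id).1 hμ
  have hν_id : Integrable id ν := (integrable_norm_iff aestronglyMeasurable_id).1 hν
  refine ⟨exists_coupling_integral_norm_sub_condExp_le hμ_id hν_id, ?_⟩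
  rintro ⟨π, hπ, rfl, rfl, hπ_le⟩ f hf_convex hf_lip
  have h_fst : Integrable Prod.fst π := hμ_id.comp_measurable measurable_fst
  have h_snd : Integrable Prod.snd π := hν_id.comp_measurable measurable_snd
  rw [integral_map measurable_fst.aemeasurable hf_lip.continuous.aestronglyMeasurable,
    integral_map measurable_snd.aemeasurable hf_lip.continuous.aestronglyMeasurable]
  have h_le := integral_convex_lipschitzWith_le measurable_fst.comap_le hf_convex hf_lip h_fst h_snd
  rw [NNReal.coe_one, one_mul] at h_le
  linarith

/-- approximate Strassen: For `ε > 0` and probability measures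
`μ, ν` on `ℝᵐ` with finite first moments, `∫ f dμ ≤ ∫ f dν + ε` holds for all
1-Lipschitz convex `f` if and only if there is a coupling `(X,Y)` with laws
`μ, ν` such that `E[‖X - E[Y|X]‖] ≤ ε`. -/
theorem stmt_4 {E : Type*} [NormedAddCommGroup E] [NormedSpace ℝ E]
    [FiniteDimensional ℝ E] [MeasurableSpace E] [BorelSpace E]
    (μ ν : Measure E) [IsProbabilityMeasure μ] [IsProbabilityMeasure ν]
    (hμ1 : Integrable (fun x => ‖x‖) μ) (hν1 : Integrable (fun x => ‖x‖) ν)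
    (ε : ℝ) (hε : 0 < ε) :
    (∀ f : E → ℝ, ConvexOn ℝ Set.univ f → LipschitzWith 1 f →
        ∫ x, f x ∂μ ≤ ∫ x, f x ∂ν + ε) ↔
      (∃ π : Measure (E × E), IsProbabilityMeasure π ∧
        π.map Prod.fst = μ ∧ π.map Prod.snd = ν ∧
        ∫ p, ‖p.1 -
            (π[(fun q : E × E => q.2) |
              MeasurableSpace.comap Prod.fst inferInstance]) p‖ ∂π ≤ ε) := by
  have := FiniteDimensional.complete ℝ E
  have := FiniteDimensional.proper_real E
  exact stmt_4_general μ ν hμ1 hν1 ε
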